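/- There exists a constant C > 0 such that for all positive integers Q and K: ∑_{q=1}^{Q} F(q)^K ≤ Q·(C·K²)^K, where F(q) = ∑_{r | q} (log r)/r. -/

import Mathlib

open Filter

/-- `F(q) = ∑_{r | q} (log₂ r)/r`. -/
noncomputable def Ffun (q : ℕ) : ℝ := ∑ r ∈ q.divisors, Real.logb 2 r / r

/-!
Write `log₂ r / r = w r * f r` with `w r = r ^ (-s)` and `s = 1 + 1 / (2 p)`. Hölder's inequality
with weights `w` replaces the `p`-th power of a divisor sum by a divisor sum of `p`-th powers, and
averaging over `q ≤ Q` gains a factor `1 / r`, the density of the multiples of `r`. The exponent `s`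
is chosen so that `f r ^ p / r` stays bounded, by `(2 p / ln 2) ^ p`; every remaining sum is then a
partial sum of `ζ(s)`, which is at most `s / (s - 1) ≤ 3 p`.
-/

open Finset

lemma rpow_inner_le_weight_mul_Lp {ι : Type*} (s : Finset ι) {w f : ι → ℝ} {p : ℝ}
    (hp : 1 ≤ p) (hw : ∀ i, 0 ≤ w i) (hf : ∀ i, 0 ≤ f i) :
    (∑ i ∈ s, w i * f i) ^ p ≤ (∑ i ∈ s, w i) ^ (p - 1) * ∑ i ∈ s, w i * f i ^ p := by
  have hp0 : p ≠ 0 := by positivity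
  have hw_sum : 0 ≤ ∑ i ∈ s, w i := sum_nonneg fun i _ ↦ hw i
  have hwf (i : ι) : 0 ≤ w i * f i := mul_nonneg (hw i) (hf i)
  have hwfp (i : ι) : 0 ≤ w i * f i ^ p := mul_nonneg (hw i) (Real.rpow_nonneg (hf i) p)
  have hwfp_sum : 0 ≤ ∑ i ∈ s, w i * f i ^ p := sum_nonneg fun i _ ↦ hwfp i
  calc (∑ i ∈ s, w i * f i) ^ p
      ≤ ((∑ i ∈ s, w i) ^ (1 - p⁻¹) * (∑ i ∈ s, w i * f i ^ p) ^ p⁻¹) ^ p :=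
        Real.rpow_le_rpow (sum_nonneg fun i _ ↦ hwf i)
          (Real.inner_le_weight_mul_Lp_of_nonneg s hp w f hw hf) (by positivity)
    _ = (∑ i ∈ s, w i) ^ (p - 1) * ∑ i ∈ s, w i * f i ^ p := by
        rw [Real.mul_rpow (by positivity) (by positivity), ← Real.rpow_mul hw_sum,
          Real.rpow_inv_rpow hwfp_sum hp0, sub_mul, one_mul, inv_mul_cancel₀ hp0]

lemma divisors_subset_Icc {q Q : ℕ} (hq : q ≤ Q) : q.divisors ⊆ Icc 1 Q := fun _ hr ↦
  mem_Icc.2 ⟨Nat.pos_of_mem_divisors hr, (Nat.divisor_le hr).trans hq⟩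

lemma sum_Icc_sum_divisors {M : Type*} [AddCommMonoid M] (f : ℕ → M) (Q : ℕ) :
    ∑ q ∈ Icc 1 Q, ∑ r ∈ q.divisors, f r = ∑ r ∈ Icc 1 Q, (Q / r) • f r := by
  have mem_comm (q r : ℕ) :
      q ∈ Icc 1 Q ∧ r ∈ q.divisors ↔ q ∈ {q ∈ Icc 1 Q | r ∣ q} ∧ r ∈ Icc 1 Q := by
    constructor
    · rintro ⟨hq, hr⟩
      exact ⟨mem_filter.2 ⟨hq, Nat.dvd_of_mem_divisors hr⟩,
        divisors_subset_Icc (mem_Icc.1 hq).2 hr⟩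
    · rintro ⟨hq, -⟩
      obtain ⟨hq, hrq⟩ := mem_filter.1 hq
      exact ⟨hq, Nat.mem_divisors.2 ⟨hrq, Nat.pos_iff_ne_zero.1 (mem_Icc.1 hq).1⟩⟩
  rw [sum_comm' mem_comm]
  refine sum_congr rfl fun r _ ↦ ?_
  rw [sum_const]
  exact congrArg (· • f r) (Nat.Ioc_filter_dvd_card_eq_div Q r)

lemma sum_Icc_sum_divisors_le {f : ℕ → ℝ} (hf : ∀ r, 0 ≤ f r) (Q : ℕ) :
    ∑ q ∈ Icc 1 Q, ∑ r ∈ q.divisors, f r ≤ Q * ∑ r ∈ Icc 1 Q, f r / r := by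
  rw [sum_Icc_sum_divisors, mul_sum]
  refine sum_le_sum fun r _ ↦ ?_
  calc (Q / r) • f r = ((Q / r : ℕ) : ℝ) * f r := nsmul_eq_mul _ _
    _ ≤ (Q / r : ℝ) * f r := mul_le_mul_of_nonneg_right Nat.cast_div_le (hf r)
    _ = Q * (f r / r) := by ring

lemma sum_Icc_rpow_sum_divisors_mul_le {w f : ℕ → ℝ} {p : ℝ} (hp : 1 ≤ p)
    (hw : ∀ r, 0 ≤ w r) (hf : ∀ r, 0 ≤ f r) (Q : ℕ) :
    ∑ q ∈ Icc 1 Q, (∑ r ∈ q.divisors, w r * f r) ^ p ≤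
      Q * ((∑ r ∈ Icc 1 Q, w r) ^ (p - 1) * ∑ r ∈ Icc 1 Q, w r * f r ^ p / r) := by
  have hwf (r : ℕ) : 0 ≤ w r * f r ^ p := mul_nonneg (hw r) (Real.rpow_nonneg (hf r) p)
  have hw_sum (s : Finset ℕ) : 0 ≤ ∑ r ∈ s, w r := sum_nonneg fun r _ ↦ hw r
  have holder : ∀ q ∈ Icc 1 Q, (∑ r ∈ q.divisors, w r * f r) ^ p ≤
      (∑ r ∈ Icc 1 Q, w r) ^ (p - 1) * ∑ r ∈ q.divisors, w r * f r ^ p := fun q hq ↦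
    (rpow_inner_le_weight_mul_Lp q.divisors hp hw hf).trans <|
      mul_le_mul_of_nonneg_right
        (Real.rpow_le_rpow (hw_sum _)
          (sum_le_sum_of_subset_of_nonneg (divisors_subset_Icc (mem_Icc.1 hq).2) fun r _ _ ↦ hw r)
          (sub_nonneg.2 hp))
        (sum_nonneg fun r _ ↦ hwf r)
  calc ∑ q ∈ Icc 1 Q, (∑ r ∈ q.divisors, w r * f r) ^ p
      ≤ (∑ r ∈ Icc 1 Q, w r) ^ (p - 1) * ∑ q ∈ Icc 1 Q, ∑ r ∈ q.divisors, w r * f r ^ p := by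
        rw [mul_sum]
        exact sum_le_sum holder
    _ ≤ (∑ r ∈ Icc 1 Q, w r) ^ (p - 1) * (Q * ∑ r ∈ Icc 1 Q, w r * f r ^ p / r) :=
        mul_le_mul_of_nonneg_left (sum_Icc_sum_divisors_le hwf Q) (Real.rpow_nonneg (hw_sum _) _)
    _ = Q * ((∑ r ∈ Icc 1 Q, w r) ^ (p - 1) * ∑ r ∈ Icc 1 Q, w r * f r ^ p / r) :=
        mul_left_comm _ _ _

lemma integral_one_rpow_neg_le {s b : ℝ} (hs : 1 < s) (hb : 1 ≤ b) :
    ∫ x in (1 : ℝ)..b, x ^ (-s) ≤ 1 / (s - 1) := by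
  have zero_notMem : (0 : ℝ) ∉ Set.uIcc 1 b := Set.notMem_uIcc_of_lt one_pos (by linarith)
  calc ∫ x in (1 : ℝ)..b, x ^ (-s) = (1 - b ^ (-s + 1)) / (s - 1) := by
        rw [integral_rpow (.inr ⟨by linarith, zero_notMem⟩), Real.one_rpow, ← neg_div_neg_eq]
        ring
    _ ≤ 1 / (s - 1) := by
        have : 0 ≤ b ^ (-s + 1) := by positivity
        have : 0 < s - 1 := sub_pos.2 hs
        gcongr
        linarith

lemma sum_Icc_rpow_neg_le {s : ℝ} (hs : 1 < s) (n : ℕ) :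
    ∑ r ∈ Icc 1 n, (r : ℝ) ^ (-s) ≤ s / (s - 1) := by
  have hs0 : 0 < s - 1 := sub_pos.2 hs
  rcases n.eq_zero_or_pos with rfl | hn
  · simp only [Icc_eq_empty_of_lt one_pos, sum_empty]
    positivity
  have antitone : AntitoneOn (fun x : ℝ ↦ x ^ (-s)) (Set.Icc (1 : ℕ) n) := fun x hx y _ hxy ↦
    Real.rpow_le_rpow_of_nonpos (one_pos.trans_le (by simpa using hx.1)) hxy (by linarith)
  calc ∑ r ∈ Icc 1 n, (r : ℝ) ^ (-s)
      = 1 + ∑ r ∈ Ico 1 n, ((r + 1 : ℕ) : ℝ) ^ (-s) := by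
        rw [← Ico_add_one_right_eq_Icc, sum_eq_sum_Ico_succ_bot (by lia),
          ← sum_Ico_add' fun r : ℕ ↦ (r : ℝ) ^ (-s), Nat.cast_one, Real.one_rpow]
    _ ≤ 1 + ∫ x in (1 : ℕ)..n, x ^ (-s) := by
        gcongr
        exact antitone.sum_le_integral_Ico hn
    _ ≤ 1 + 1 / (s - 1) := by
        gcongr
        exact_mod_cast integral_one_rpow_neg_le hs (Nat.one_le_cast.2 hn)
    _ = s / (s - 1) := by
        field_simp
        ring

lemma rpow_mul_logb_rpow_le {b x p : ℝ} (hb : 1 < b) (hx : 1 ≤ x) (hp : 0 < p) :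
    (x ^ (1 / (2 * p)) * Real.logb b x) ^ p ≤ (2 * p / Real.log b) ^ p * x := by
  have hx0 : 0 < x := by positivity
  have hlogb : 0 < Real.log b := Real.log_pos hb
  have hlog : Real.logb b x ≤ 2 * p / Real.log b * x ^ (1 / (2 * p)) := by
    calc Real.logb b x ≤ x ^ (1 / (2 * p)) / (1 / (2 * p)) / Real.log b := by
          rw [Real.logb]
          gcongr
          exact Real.log_le_rpow_div hx0.le (by positivity)
      _ = 2 * p / Real.log b * x ^ (1 / (2 * p)) := by field_simp
  calc (x ^ (1 / (2 * p)) * Real.logb b x) ^ p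
      ≤ (x ^ (1 / (2 * p)) * (2 * p / Real.log b * x ^ (1 / (2 * p)))) ^ p := by
        have := Real.logb_nonneg hb hx
        gcongr
    _ = (2 * p / Real.log b * x ^ (1 / p)) ^ p := by
        rw [mul_left_comm, ← Real.rpow_add hx0]
        congr 3
        field_simp
        norm_num
    _ = (2 * p / Real.log b) ^ p * x := by
        rw [Real.mul_rpow (by positivity) (by positivity), one_div,
          Real.rpow_inv_rpow hx0.le hp.ne']

lemma Ffun_eq_sum_rpow_neg_mul (s : ℝ) (q : ℕ) :
    Ffun q = ∑ r ∈ q.divisors, (r : ℝ) ^ (-s) * ((r : ℝ) ^ (s - 1) * Real.logb 2 r) := by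
  refine sum_congr rfl fun r hr ↦ ?_
  have hr0 : (0 : ℝ) < r := Nat.cast_pos.2 (Nat.pos_of_mem_divisors hr)
  rw [← mul_assoc, ← Real.rpow_add hr0, show -s + (s - 1) = -1 by ring, Real.rpow_neg_one,
    div_eq_inv_mul]

lemma sum_Icc_Ffun_rpow_le_mul_rpow_sum (Q : ℕ) {p : ℝ} (hp : 1 ≤ p) :
    ∑ q ∈ Icc 1 Q, Ffun q ^ p ≤
      Q * (2 * p / Real.log 2 * ∑ r ∈ Icc 1 Q, (r : ℝ) ^ (-(1 + 1 / (2 * p)))) ^ p := by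
  set s : ℝ := 1 + 1 / (2 * p) with hs
  set S : ℝ := ∑ r ∈ Icc 1 Q, (r : ℝ) ^ (-s) with hS
  set D : ℝ := 2 * p / Real.log 2
  have hD0 : 0 ≤ D := by positivity
  have hS0 : 0 ≤ S := sum_nonneg fun r _ ↦ by positivity
  have term_le : ∀ r ∈ Icc 1 Q, (r : ℝ) ^ (-s) * ((r : ℝ) ^ (s - 1) * Real.logb 2 r) ^ p / r ≤
      (r : ℝ) ^ (-s) * D ^ p := fun r hr ↦ by
    have hr1 : (1 : ℝ) ≤ r := Nat.one_le_cast.2 (mem_Icc.1 hr).1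
    rw [mul_div_assoc, show s - 1 = 1 / (2 * p) by rw [hs, add_sub_cancel_left]]
    gcongr
    exact (div_le_iff₀ (by positivity)).2 (rpow_mul_logb_rpow_le one_lt_two hr1 (by positivity))
  calc ∑ q ∈ Icc 1 Q, Ffun q ^ p
      ≤ Q * (S ^ (p - 1) * ∑ r ∈ Icc 1 Q,
          (r : ℝ) ^ (-s) * ((r : ℝ) ^ (s - 1) * Real.logb 2 r) ^ p / r) := by
        simp only [Ffun_eq_sum_rpow_neg_mul s]
        refine sum_Icc_rpow_sum_divisors_mul_le hp (fun r ↦ by positivity) (fun r ↦ ?_) Q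
        exact mul_nonneg (by positivity)
          (div_nonneg (Real.log_natCast_nonneg r) (Real.log_nonneg one_le_two))
    _ ≤ Q * (S ^ (p - 1) * (S * D ^ p)) := by
        rw [hS, sum_mul _ _ (D ^ p)]
        gcongr with r hr
        exact term_le r hr
    _ = Q * (D * S) ^ p := by
        rw [← mul_assoc (S ^ (p - 1)), ← Real.rpow_add_one' hS0 (by linarith), sub_add_cancel,
          mul_comm (S ^ p), Real.mul_rpow hD0 hS0]

theorem stmt13_general (Q : ℕ) {p : ℝ} (hp : 1 ≤ p) :
    ∑ q ∈ Icc 1 Q, Ffun q ^ p ≤ Q * (6 / Real.log 2 * p ^ 2) ^ p := by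
  have hs : 1 < 1 + 1 / (2 * p) := lt_add_of_pos_right 1 (by positivity)
  have zeta_le : ∑ r ∈ Icc 1 Q, (r : ℝ) ^ (-(1 + 1 / (2 * p))) ≤ 3 * p := by
    calc ∑ r ∈ Icc 1 Q, (r : ℝ) ^ (-(1 + 1 / (2 * p)))
        ≤ (1 + 1 / (2 * p)) / (1 + 1 / (2 * p) - 1) := sum_Icc_rpow_neg_le hs Q
      _ = 2 * p + 1 := by field_simp; ring
      _ ≤ 3 * p := by linarith
  calc ∑ q ∈ Icc 1 Q, Ffun q ^ p
      ≤ Q * (2 * p / Real.log 2 * ∑ r ∈ Icc 1 Q, (r : ℝ) ^ (-(1 + 1 / (2 * p)))) ^ p :=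
        sum_Icc_Ffun_rpow_le_mul_rpow_sum Q hp
    _ ≤ Q * (2 * p / Real.log 2 * (3 * p)) ^ p := by gcongr
    _ = Q * (6 / Real.log 2 * p ^ 2) ^ p := by ring_nf

theorem stmt13 : ∃ C > (0:ℝ), ∀ Q K : ℕ, 1 ≤ Q → 1 ≤ K →
    ∑ q ∈ Finset.Icc 1 Q, (Ffun q) ^ K ≤ (Q : ℝ) * (C * (K : ℝ) ^ 2) ^ K := by
  refine ⟨6 / Real.log 2, by positivity, fun Q K _ hK ↦ ?_⟩
  exact_mod_cast stmt13_general Q (p := K) (Nat.one_le_cast.2 hK)
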